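/- For any category C, the rewrite system on words of morphisms is strongly locally confluent: if w → x and w → y with x ≠ y, then there exists a word z with x → z and y → z. In particular the system is locally confluent. -/

import Mathlib

open CategoryTheory

/-- A word of morphisms in a category `C`: a finite list of morphisms, each recorded
with its source and target. -/
abbrev CatWord (C : Type*) [Category C] : Type _ := List (Σ a b : C, a ⟶ b)

/-- The rewrite relation on words of morphisms: delete an identity entry, or replace
two adjacent composable entries `(f, g)` by the single entry `g ∘ f`. -/
inductive RwStep {C : Type*} [Category C] : CatWord C → CatWord C → Prop
  | del (u v : CatWord C) (a : C) :
      RwStep (u ++ ⟨a, a, 𝟙 a⟩ :: v) (u ++ v)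
  | comp (u v : CatWord C) {a b c : C} (f : a ⟶ b) (g : b ⟶ c) :
      RwStep (u ++ ⟨a, b, f⟩ :: ⟨b, c, g⟩ :: v) (u ++ ⟨a, c, f ≫ g⟩ :: v)

/-!
Two distinct one-step rewrites of a word either take place in disjoint segments, and then commute,
or overlap. A deletion of `𝟙 a` overlapping a composition makes the same word as the composition,
by the unit laws; two compositions overlapping in the middle of `f, g, h` are both completed by the
triple composite, by associativity. Induction on the word reduces everything to the case in which
one of the rewrites involves the first entry.
-/

open Relation

theorem join_reflTransGen_of_eq_or_join {α : Type*} {r : α → α → Prop} {x y : α}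
    (h : x = y ∨ Join r x y) : Join (ReflTransGen r) x y := by
  rcases h with rfl | ⟨z, hxz, hyz⟩
  · exact ⟨x, .refl, .refl⟩
  · exact ⟨z, .single hxz, .single hyz⟩

section

variable {C : Type*} [Category C]

/-- A rewrite step whose redex starts at the first entry of the word. Steps further to the right
are recovered from these by `rwStep_cons_iff`. -/
inductive RwHeadStep : CatWord C → CatWord C → Prop
  | del (v : CatWord C) (a : C) : RwHeadStep (⟨a, a, 𝟙 a⟩ :: v) v
  | comp (v : CatWord C) {a b c : C} (f : a ⟶ b) (g : b ⟶ c) :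
      RwHeadStep (⟨a, b, f⟩ :: ⟨b, c, g⟩ :: v) (⟨a, c, f ≫ g⟩ :: v)

theorem RwHeadStep.rwStep {w x : CatWord C} (h : RwHeadStep w x) : RwStep w x := by
  cases h with
  | del _ a => exact .del [] x a
  | comp v f g => exact .comp [] v f g

theorem RwHeadStep.right_unique {w x y : CatWord C} (hx : RwHeadStep w x)
    (hy : RwHeadStep w y) : x = y := by
  cases hx with
  | del =>
    cases hy with
    | del => rfl
    | comp => rw [Category.id_comp]
  | comp =>
    cases hy with
    | del => rw [Category.id_comp]
    | comp => rfl

theorem not_rwStep_nil (x : CatWord C) : ¬ RwStep [] x := by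
  generalize hw : ([] : CatWord C) = w
  rintro (_ | _) <;> simp at hw

theorem RwStep.cons (p : Σ a b : C, a ⟶ b) {w x : CatWord C} (h : RwStep w x) :
    RwStep (p :: w) (p :: x) := by
  cases h with
  | del u v a => exact .del (p :: u) v a
  | comp u v f g => exact .comp (p :: u) v f g

theorem rwStep_cons_iff {p : Σ a b : C, a ⟶ b} {w x : CatWord C} :
    RwStep (p :: w) x ↔ RwHeadStep (p :: w) x ∨ ∃ w', RwStep w w' ∧ x = p :: w' := by
  constructor
  · generalize hpw : p :: w = pw
    rintro (⟨_ | ⟨q, u⟩, v, a⟩ | ⟨_ | ⟨q, u⟩, v, f, g⟩)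
    · exact .inl (.del v a)
    · obtain ⟨rfl, rfl⟩ := List.cons.inj hpw
      exact .inr ⟨_, .del u v a, rfl⟩
    · exact .inl (.comp v f g)
    · obtain ⟨rfl, rfl⟩ := List.cons.inj hpw
      exact .inr ⟨_, .comp u v f g, rfl⟩
  · rintro (h | ⟨w', h, rfl⟩)
    · exact h.rwStep
    · exact h.cons p

theorem RwHeadStep.eq_or_join_cons {p : Σ a b : C, a ⟶ b} {w w' x : CatWord C}
    (hx : RwHeadStep (p :: w) x) (hw : RwStep w w') : x = p :: w' ∨ Join RwStep x (p :: w') := by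
  cases hx with
  | del _ a => exact .inr ⟨w', hw, .del [] w' a⟩
  | comp v f g =>
    rcases rwStep_cons_iff.mp hw with hw | ⟨v', hv, rfl⟩
    · cases hw with
      | del => exact .inl (by rw [Category.comp_id])
      | comp v _ h =>
        have hfgh := RwStep.comp [] v (f ≫ g) h
        rw [Category.assoc] at hfgh
        exact .inr ⟨_, hfgh, .comp [] v f (g ≫ h)⟩
    · exact .inr ⟨_, hv.cons _, .comp [] v' f g⟩

theorem RwStep.eq_or_join {w x y : CatWord C} (hx : RwStep w x) (hy : RwStep w y) :
    x = y ∨ Join RwStep x y := by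
  induction w generalizing x y with
  | nil => exact absurd hx (not_rwStep_nil x)
  | cons p w ih =>
    rcases rwStep_cons_iff.mp hx with hx | ⟨x', hx', rfl⟩ <;>
      rcases rwStep_cons_iff.mp hy with hy | ⟨y', hy', rfl⟩
    · exact .inl (hx.right_unique hy)
    · exact hx.eq_or_join_cons hy'
    · exact (hy.eq_or_join_cons hx').imp Eq.symm fun ⟨z, hyz, hxz⟩ ↦ ⟨z, hxz, hyz⟩
    · rcases ih hx' hy' with rfl | ⟨z, hxz, hyz⟩
      · exact .inl rfl
      · exact .inr ⟨p :: z, hxz.cons p, hyz.cons p⟩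

end

/-- The rewrite system on words of morphisms is strongly locally confluent: if `w → x`
and `w → y` with `x ≠ y`, then there is `z` with `x → z` and `y → z`.  In particular it
is locally confluent. -/
theorem rwStep_strongly_locally_confluent (C : Type*) [Category C] :
    (∀ w x y : CatWord C, RwStep w x → RwStep w y → x ≠ y →
      ∃ z : CatWord C, RwStep x z ∧ RwStep y z) ∧
    (∀ w x y : CatWord C, RwStep w x → RwStep w y →
      ∃ z : CatWord C, Relation.ReflTransGen RwStep x z ∧ Relation.ReflTransGen RwStep y z) := by
  constructor
  · intro w x y hx hy hne
    exact (hx.eq_or_join hy).resolve_left hne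
  · intro w x y hx hy
    exact join_reflTransGen_of_eq_or_join (hx.eq_or_join hy)
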